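/- Let L be a left Leibniz algebra over a field F of characteristic zero and let g : L → L be a commuting linear map. Then the bilinear map f : L × L → L defined by f(x,y) = [g(x),y] is a skew-symmetric biderivation of L, i.e. f is a biderivation and f(x,y) = −f(y,x) for all x,y ∈ L. -/

import Mathlib

/-!
The left Leibniz identity says that every left multiplication `[x, -]` is a derivation, so
`f(x, -) = [g(x), -]` is one. Linearizing `[g(x), x] = 0` makes `f` skew-symmetric, and therefore
`f(-, y) = -f(y, -)` is a derivation as well.
-/

section Biderivation

variable {R L : Type*} [CommSemiring R] [AddCommGroup L] [Module R L]

/-- `D` is a derivation of the algebra with underlying module `L` and product `b`. The product is an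
unbundled bilinear map because neither associativity nor any Lie axiom is assumed of it. -/
def IsDerivation (b : L →ₗ[R] L →ₗ[R] L) (D : L →ₗ[R] L) : Prop :=
  ∀ y z, D (b y z) = b (D y) z + b y (D z)

/-- `f` is a biderivation of the algebra with product `b`: a derivation in each argument when the
other one is fixed. -/
def IsBiderivation (b f : L →ₗ[R] L →ₗ[R] L) : Prop :=
  (∀ x, IsDerivation b (f x)) ∧ ∀ y, IsDerivation b (f.flip y)

variable {b f : L →ₗ[R] L →ₗ[R] L}

theorem IsDerivation.neg {D : L →ₗ[R] L} (hD : IsDerivation b D) : IsDerivation b (-D) := by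
  intro y z
  simp only [LinearMap.neg_apply, map_neg, hD y z, neg_add]

theorem isDerivation_of_leibniz
    (hleib : ∀ x y z : L, b x (b y z) = b y (b x z) + b (b x y) z) (x : L) :
    IsDerivation b (b x) :=
  fun y z => (hleib x y z).trans (add_comm _ _)

theorem isBiderivation_of_isAlt (hf : f.IsAlt) (hder : ∀ x, IsDerivation b (f x)) :
    IsBiderivation b f := by
  refine ⟨hder, fun y => ?_⟩
  have flip_eq_neg : f.flip y = -f y := LinearMap.ext fun x => (hf.neg y x).symm
  rw [flip_eq_neg]
  exact (hder y).neg

theorem stmt_14_general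
    (hleib : ∀ x y z : L, b x (b y z) = b y (b x z) + b (b x y) z)
    (g : L →ₗ[R] L) (hg : ∀ x : L, b (g x) x = 0) :
    IsBiderivation b (b ∘ₗ g) ∧ ∀ x y : L, b (g x) y = -b (g y) x := by
  have isAlt : (b ∘ₗ g).IsAlt := hg
  exact ⟨isBiderivation_of_isAlt isAlt fun x => isDerivation_of_leibniz hleib (g x),
    fun x y => (isAlt.neg y x).symm⟩

end Biderivation

/-- Let `L` be a left Leibniz algebra over a field of characteristic zero
and `g : L → L` a commuting linear map (`[g(x),x] = [x,g(x)] = 0` for all `x`). Then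
`f(x,y) = [g(x),y]` is a skew-symmetric biderivation of `L`. -/
theorem stmt_14 (F : Type*) [Field F] [CharZero F] (L : Type*) [AddCommGroup L] [Module F L]
    (b : L →ₗ[F] L →ₗ[F] L)
    (hleib : ∀ x y z : L, b x (b y z) = b y (b x z) + b (b x y) z)
    (g : L →ₗ[F] L)
    (hg : ∀ x : L, b (g x) x = 0 ∧ b x (g x) = 0) :
    -- `f(x,y) = [g(x),y]` is a biderivation: `f(x,-)` and `f(-,y)` are derivations
    (∀ x y z : L, b (g x) (b y z) = b (b (g x) y) z + b y (b (g x) z)) ∧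
    (∀ x y z : L, b (g (b x z)) y = b (b (g x) y) z + b x (b (g z) y)) ∧
    -- and it is skew-symmetric
    (∀ x y : L, b (g x) y = - b (g y) x) := by
  obtain ⟨⟨left, right⟩, skew⟩ := stmt_14_general hleib g fun x => (hg x).1
  exact ⟨left, fun x y z => right y x z, skew⟩
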